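/- Let σ be a viable and dynamic execution strategy for Γ_Φ. Let s be any scenario and i ∈ {1, …, n}, and suppose that [σ(s)]_{B_i} − [σ(s)]_{A_i} ≤ i−1. Let h = 0 if [σ(s)]_{C_i⁰} < [σ(s)]_{B_i} + 1 and h = 1 otherwise. Then for s′ = s[h/x_i] we have [σ(s′)]_{B_{i+1}} − [σ(s′)]_{A_{i+1}} ≤ i. -/

import Mathlib

/-!
Two facts about a dynamic strategy drive the proof.

* `CSTN.Dynamic.eq_of_le`: if two scenarios differ only on variables that are observed, in the
  first scenario, no earlier than time `t`, then every task executed by time `t` in either scenario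
  is executed at the same time in both. The earliest disagreement would otherwise be preceded by
  equal histories.
* `GammaPhi_C0_or_C1_lt`: under the activation constraint `B_i - A_i ≤ i`, one of `C_i⁰`, `C_i¹`
  is executed before `B_i + 1`. If neither were, the strategy would have to place `D_i` by time
  `B_i + 1` without knowing `c_i⁰` and `c_i¹`. The constraint for both true forces
  `D_i ≤ B_i + 1`, the one for both false forces `D_i ≥ A_i + (n + 2)`, and these are incompatible
  with activation.

So the chosen `C_i^h` is executed before `B_i + 1 ≤ A_i + n + 2 ≤ X_i`. Flipping `x_i` to `h` thus
changes neither `A_i` nor `C_i^h`, and in the new scenario `B_{i+1} ≤ C_i^h + (n + 4)` while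
`A_{i+1} ≥ A_i + (n + 4)`, so the gap grows by at most one.
-/


open Classical

/-- A label over propositional variables `P`: a conjunction of positive or negative
literals over distinct variables, encoded as a partial assignment (`none` means the
variable does not occur in the label). The empty label is `fun _ => none`. -/
abbrev CLabel (P : Type) := P → Option Bool

/-- The empty label `λ`. -/
def emptyLabel (P : Type) : CLabel P := fun _ => none

/-- A scenario `s` satisfies a label `ℓ` (written `s ⊨ ℓ`). -/
def sats {P : Type} (s : P → Bool) (ℓ : CLabel P) : Prop :=
  ∀ p b, ℓ p = some b → s p = b

/-- A Conditional Simple Temporal Network over tasks `T` and propositional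
variables `P`.  A labeled constraint `(X, Y, δ, ℓ)` represents `(Y - X ≤ δ, ℓ)`. -/
structure CSTN (T P : Type) where
  /-- The labeled constraints. -/
  C : Set (T × T × ℝ × CLabel P)
  Cfin : C.Finite
  /-- The label of each task. -/
  L : T → CLabel P
  /-- The observation tasks. -/
  OT : Set T
  /-- The observation task of each propositional variable. -/
  obs : P → T
  obs_mem : ∀ p, obs p ∈ OT
  obs_inj : Function.Injective obs
  obs_surj : ∀ X ∈ OT, ∃ p, obs p = X
  /-- Restriction WD1. -/
  wd1 : ∀ c ∈ C, ∀ s : P → Bool, sats s c.2.2.2 → sats s (L c.1) ∧ sats s (L c.2.1)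

namespace CSTN

variable {T P : Type} (Γ : CSTN T P)

/-- The tasks `𝒯_s` executed in scenario `s` (the tasks of the projection `Γ_s`).
An execution strategy is encoded as a total function `σ : (P → Bool) → T → ℝ`;
the values `σ s X` for `X ∉ 𝒯_s` are irrelevant. -/
def Tasks (s : P → Bool) : Set T := {X | sats s (Γ.L X)}

/-- The history `Hist(t, s, σ)`: the partial scenario recording the values in `s` of
the propositional variables observed strictly before time `t`. -/
noncomputable def Hist (σ : (P → Bool) → T → ℝ) (t : ℝ) (s : P → Bool) : P → Option Bool :=
  fun p => if Γ.obs p ∈ Γ.Tasks s ∧ σ s (Γ.obs p) < t then some (s p) else none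

/-- The execution strategy `σ` is dynamic. -/
def Dynamic (σ : (P → Bool) → T → ℝ) : Prop :=
  ∀ s s' : P → Bool, ∀ X ∈ Γ.Tasks s,
    Γ.Hist σ (σ s X) s = Γ.Hist σ (σ s X) s' → X ∈ Γ.Tasks s' ∧ σ s' X = σ s X

/-- The execution strategy `σ` is viable: in every scenario `s`, the schedule `σ s`
satisfies all constraints of the projection `Γ_s`. -/
def Viable (σ : (P → Bool) → T → ℝ) : Prop :=
  ∀ s : P → Bool, ∀ c ∈ Γ.C, sats s c.2.2.2 → σ s c.2.1 - σ s c.1 ≤ c.2.2.1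

/-- `Γ` is dynamically controllable: it admits a dynamic and viable execution strategy. -/
def DynamicallyControllable : Prop :=
  ∃ σ : (P → Bool) → T → ℝ, Γ.Dynamic σ ∧ Γ.Viable σ

end CSTN

/-! ### The reduction from Q3SAT: the CSTN `Γ_Φ` -/

/-- A literal of the Q3SAT formula: a variable `x i` (`Sum.inl i`) or `y i`
(`Sum.inr i`) together with its sign (`true` = positive occurrence). -/
abbrev QLit (n : ℕ) := (Fin n ⊕ Fin n) × Bool

/-- A clause `l₁ ∨ l₂ ∨ l₃` of the 3CNF `φ`. -/
abbrev QClause (n : ℕ) := QLit n × QLit n × QLit n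

/-- The propositional variables `x i`, `y i`, `c i ⁰`, `c i ¹` of `Γ_Φ` (0-based). -/
inductive PhiVar (n : ℕ) where
  | x (i : Fin n) | y (i : Fin n) | c0 (i : Fin n) | c1 (i : Fin n)
deriving DecidableEq

/-- The tasks of `Γ_Φ` (0-based: paper's `A_i`, `i = 1, …, n+1`, is `A ⟨i-1⟩`). -/
inductive PhiTask (n : ℕ) where
  | A (i : Fin (n + 1)) | B (i : Fin (n + 1))
  | C0 (i : Fin n) | C1 (i : Fin n) | D (i : Fin n)
  | X (i : Fin n) | Y (i : Fin n)
deriving DecidableEq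

/-- The propositional variable on which a literal occurs. -/
def litVar {n : ℕ} (l : QLit n) : PhiVar n :=
  match l.1 with
  | .inl i => .x i
  | .inr i => .y i

/-- The literals of a clause occur on pairwise distinct variables
(so that `ℓ_j = ¬l₁ ∧ ¬l₂ ∧ ¬l₃` is a well-formed label). -/
def GoodClause {n : ℕ} (c : QClause n) : Prop :=
  litVar c.1 ≠ litVar c.2.1 ∧ litVar c.1 ≠ litVar c.2.2 ∧ litVar c.2.1 ≠ litVar c.2.2

/-- A literal evaluates to true under an assignment. -/
def evalLit {n : ℕ} (s : PhiVar n → Bool) (l : QLit n) : Prop := s (litVar l) = l.2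

/-- A clause evaluates to true under an assignment. -/
def evalClause {n : ℕ} (s : PhiVar n → Bool) (c : QClause n) : Prop :=
  evalLit s c.1 ∨ evalLit s c.2.1 ∨ evalLit s c.2.2

/-- The 3CNF `φ` evaluates to true under an assignment. -/
def evalCNF {n m : ℕ} (cl : Fin m → QClause n) (s : PhiVar n → Bool) : Prop :=
  ∀ j, evalClause s (cl j)

/-- The label consisting of the single literal forcing `p` to `b`. -/
def singleLabel {n : ℕ} (p : PhiVar n) (b : Bool) : CLabel (PhiVar n) :=
  fun q => if q = p then some b else none

/-- The label conjunction of two literals. -/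
def pairLabel {n : ℕ} (p : PhiVar n) (bp : Bool) (q : PhiVar n) (bq : Bool) :
    CLabel (PhiVar n) :=
  fun r => if r = p then some bp else if r = q then some bq else none

/-- The label `ℓ_j := ¬l_{j,1} ∧ ¬l_{j,2} ∧ ¬l_{j,3}`, the negation of the clause. -/
def clauseLabel {n : ℕ} (c : QClause n) : CLabel (PhiVar n) :=
  fun q =>
    if q = litVar c.1 then some (!c.1.2)
    else if q = litVar c.2.1 then some (!c.2.1.2)
    else if q = litVar c.2.2 then some (!c.2.2.2)
    else none

/-- `𝒪(x i) = X i`, `𝒪(y i) = Y i`, `𝒪(c i ⁰) = C i ⁰`, `𝒪(c i ¹) = C i ¹`. -/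
def phiObs (n : ℕ) : PhiVar n → PhiTask n
  | .x i => .X i
  | .y i => .Y i
  | .c0 i => .C0 i
  | .c1 i => .C1 i

abbrev PhiCon (n : ℕ) := PhiTask n × PhiTask n × ℝ × CLabel (PhiVar n)

/-- The seven constraints of the `i`-th gadget (as `(X, Y, δ, ℓ)` meaning `Y - X ≤ δ`):
`(D_i ≤ B_i + 1, c_i⁰ ∧ c_i¹)`, `(D_i ≥ A_i + (n+2), ¬c_i⁰ ∧ ¬c_i¹)`,
`(X_i ≥ A_i + (n+2), λ)`, `(Y_i ≥ X_i + 1, λ)`, `(A_{i+1} ≥ Y_i + 1, λ)`,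
`(B_{i+1} ≤ C_i⁰ + (n+4), ¬x_i)`, `(B_{i+1} ≤ C_i¹ + (n+4), x_i)`. -/
def gadget (n : ℕ) (i : Fin n) : Set (PhiCon n) :=
  {(.B i.castSucc, .D i, 1, pairLabel (.c0 i) true (.c1 i) true),
   (.D i, .A i.castSucc, -((n : ℝ) + 2), pairLabel (.c0 i) false (.c1 i) false),
   (.X i, .A i.castSucc, -((n : ℝ) + 2), emptyLabel _),
   (.Y i, .X i, -1, emptyLabel _),
   (.A i.succ, .Y i, -1, emptyLabel _),
   (.C0 i, .B i.succ, (n : ℝ) + 4, singleLabel (.x i) false),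
   (.C1 i, .B i.succ, (n : ℝ) + 4, singleLabel (.x i) true)}

/-- The constraints of `Γ_Φ`: `(B₁ - A₁ ≤ 0, λ)`, the gadget constraints, and the
clause constraints `(B_{n+1} - A_{n+1} ≥ n+1, ℓ_j)` for `j = 1, …, m`. -/
def PhiC (n m : ℕ) (cl : Fin m → QClause n) : Set (PhiCon n) :=
  insert (.A 0, .B 0, (0 : ℝ), emptyLabel _)
    ((⋃ i : Fin n, gadget n i) ∪
     (⋃ j : Fin m,
       {(.B (Fin.last n), .A (Fin.last n), -((n : ℝ) + 1), clauseLabel (cl j))}))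

/-- The CSTN `Γ_Φ` associated to the Q3SAT formula
`Φ = ∃x₁∀y₁ ⋯ ∃xₙ∀yₙ ⋀_{j=1}^m (l_{j,1} ∨ l_{j,2} ∨ l_{j,3})`. -/
def GammaPhi (n m : ℕ) (cl : Fin m → QClause n) : CSTN (PhiTask n) (PhiVar n) where
  C := PhiC n m cl
  Cfin := by
    apply Set.Finite.insert
    apply Set.Finite.union
    · exact Set.finite_iUnion fun i =>
        (((((((Set.finite_singleton _).insert _).insert _).insert _).insert
          _).insert _).insert _)
    · exact Set.finite_iUnion fun j => Set.finite_singleton _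
  L := fun _ => emptyLabel _
  OT := Set.range (phiObs n)
  obs := phiObs n
  obs_mem := fun p => ⟨p, rfl⟩
  obs_inj := by
    intro p q hpq
    cases p <;> cases q <;> simp_all [phiObs]
  obs_surj := fun _ hX => hX
  wd1 := by
    intro c _ s _
    constructor <;> · intro p b hb; simp [emptyLabel] at hb

/-! ### Dynamic strategies and scenarios that agree up to a given time -/

instance PhiTask.instFinite (n : ℕ) : Finite (PhiTask n) := by
  let f : PhiTask n → ℕ × Fin (n + 1) := fun T => match T with
    | .A i => (0, i)
    | .B i => (1, i)
    | .C0 i => (2, i.castSucc)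
    | .C1 i => (3, i.castSucc)
    | .D i => (4, i.castSucc)
    | .X i => (5, i.castSucc)
    | .Y i => (6, i.castSucc)
  have hlt : ∀ T, (f T).1 < 7 := by intro T; cases T <;> simp [f]
  refine Finite.of_injective
    (fun T => ((⟨(f T).1, hlt T⟩, (f T).2) : Fin 7 × Fin (n + 1))) ?_
  intro a b hab
  cases a <;> cases b <;> simp_all [f]

/-- Scenarios that differ only on variables observed (in the first one) at or after time `t` are
indistinguishable up to `t`: a dynamic strategy schedules identically every task that either
scenario executes by time `t`. For simplicity all tasks are assumed to have the empty label. -/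
theorem CSTN.Dynamic.eq_of_le {T P : Type} [Finite T] {Γ : CSTN T P}
    {σ : (P → Bool) → T → ℝ} (hdyn : Γ.Dynamic σ) (hL : ∀ X, Γ.L X = emptyLabel P)
    {s s' : P → Bool} {t : ℝ} (hdiff : ∀ p, s p ≠ s' p → t ≤ σ s (Γ.obs p))
    {X : T} (hX : min (σ s X) (σ s' X) ≤ t) : σ s' X = σ s X := by
  have htask : ∀ r X, X ∈ Γ.Tasks r := by
    intro r X p b hb
    simp [hL, emptyLabel] at hb
  by_contra hne
  -- `Z` is a task realising the earliest disagreement, at time `min (σ s Z) (σ s' Z)`.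
  obtain ⟨Z, hZ, hmin⟩ := Set.exists_min_image {X | σ s' X ≠ σ s X}
    (fun X => min (σ s X) (σ s' X)) (Set.toFinite _) ⟨X, hne⟩
  have hut : min (σ s Z) (σ s' Z) ≤ t := (hmin X hne).trans hX
  have hhist : Γ.Hist σ (min (σ s Z) (σ s' Z)) s = Γ.Hist σ (min (σ s Z) (σ s' Z)) s' := by
    funext p
    simp only [CSTN.Hist, htask, true_and]
    by_cases heq : σ s' (Γ.obs p) = σ s (Γ.obs p)
    · rw [heq]
      split_ifs with hlt
      · by_contra hp
        exact absurd (hdiff p fun hs => hp (by rw [hs])) (by linarith)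
      · rfl
    · have hp := hmin (Γ.obs p) heq
      rw [if_neg (not_lt.2 (hp.trans (min_le_left _ _))),
        if_neg (not_lt.2 (hp.trans (min_le_right _ _)))]
  rcases min_choice (σ s Z) (σ s' Z) with h | h <;> rw [h] at hhist
  · exact hZ (hdyn s s' Z (htask _ _) hhist).2
  · exact hZ (hdyn s' s Z (htask _ _) hhist.symm).2.symm

/-! ### The gadget constraints and the activation of `C_i⁰` or `C_i¹` -/

theorem GammaPhi_gadget_le {n m : ℕ} {cl : Fin m → QClause n}
    {σ : (PhiVar n → Bool) → PhiTask n → ℝ} (hviable : (GammaPhi n m cl).Viable σ)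
    (s : PhiVar n → Bool) (i : Fin n) {c : PhiCon n} (hc : c ∈ gadget n i)
    (hs : sats s c.2.2.2) : σ s c.2.1 - σ s c.1 ≤ c.2.2.1 :=
  hviable s c (Or.inr (Or.inl (Set.mem_iUnion.2 ⟨i, hc⟩))) hs

theorem sats_emptyLabel {P : Type} (s : P → Bool) : sats s (emptyLabel P) := by
  intro p b hb
  simp [emptyLabel] at hb

theorem sats_singleLabel {n : ℕ} {s : PhiVar n → Bool} {p : PhiVar n} {b : Bool}
    (h : s p = b) : sats s (singleLabel p b) := by
  intro q c hq
  simp only [singleLabel] at hq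
  split_ifs at hq with hqp
  simp_all

theorem sats_pairLabel {n : ℕ} {s : PhiVar n → Bool} {p q : PhiVar n} {b c : Bool}
    (hp : s p = b) (hq : s q = c) : sats s (pairLabel p b q c) := by
  intro r d hr
  simp only [pairLabel] at hr
  split_ifs at hr <;> simp_all

/-- Under the activation constraint, one of `C_i⁰`, `C_i¹` is executed before `B_i + 1`. -/
theorem GammaPhi_C0_or_C1_lt {n m : ℕ} {cl : Fin m → QClause n}
    {σ : (PhiVar n → Bool) → PhiTask n → ℝ}
    (hviable : (GammaPhi n m cl).Viable σ) (hdyn : (GammaPhi n m cl).Dynamic σ)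
    (s : PhiVar n → Bool) (i : Fin n)
    (hact : σ s (.B i.castSucc) - σ s (.A i.castSucc) ≤ (i.val : ℝ)) :
    σ s (.C0 i) < σ s (.B i.castSucc) + 1 ∨ σ s (.C1 i) < σ s (.B i.castSucc) + 1 := by
  by_contra! hcon
  obtain ⟨h0, h1⟩ := hcon
  let r : Bool → PhiVar n → Bool := fun b =>
    Function.update (Function.update s (.c0 i) b) (.c1 i) b
  have hr0 : ∀ b, r b (.c0 i) = b := fun b => by simp [r]
  have hr1 : ∀ b, r b (.c1 i) = b := fun b => by simp [r]
  have key : ∀ b X, min (σ s X) (σ (r b) X) ≤ σ s (.B i.castSucc) + 1 →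
      σ (r b) X = σ s X := by
    intro b X hX
    refine hdyn.eq_of_le (fun _ => rfl) ?_ hX
    intro p hp
    by_cases hp1 : p = .c1 i
    · subst hp1; exact h1
    by_cases hp0 : p = .c0 i
    · subst hp0; exact h0
    · exact absurd (by simp [r, hp0, hp1]) hp
  have hB := key true (.B i.castSucc) ((min_le_left _ _).trans (by linarith))
  have hD1 : σ (r true) (.D i) - σ (r true) (.B i.castSucc) ≤ 1 :=
    GammaPhi_gadget_le hviable (r true) i
      (c := (.B i.castSucc, .D i, 1, pairLabel (.c0 i) true (.c1 i) true))
      (by simp [gadget]) (sats_pairLabel (hr0 _) (hr1 _))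
  have hDs := key true (.D i) ((min_le_right _ _).trans (by linarith))
  have hDs' := key false (.D i) ((min_le_left _ _).trans (by linarith))
  have hD0 : σ (r false) (.A i.castSucc) - σ (r false) (.D i) ≤ -((n : ℝ) + 2) :=
    GammaPhi_gadget_le hviable (r false) i
      (c := (.D i, .A i.castSucc, -((n : ℝ) + 2), pairLabel (.c0 i) false (.c1 i) false))
      (by simp [gadget]) (sats_pairLabel (hr0 _) (hr1 _))
  have hn0 : (0 : ℝ) ≤ n := Nat.cast_nonneg n
  -- `A_i` precedes `D_i` in this scenario, which is why it too cannot depend on `c_i⁰`, `c_i¹`.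
  have hA := key false (.A i.castSucc) ((min_le_right _ _).trans (by linarith))
  have hin : (i.val : ℝ) < n := by exact_mod_cast i.isLt
  linarith

/-- **Lemma 6** (propagation of the activation constraint). Let `σ` be viable and
dynamic for `Γ_Φ`, `s` a scenario and `i : Fin n` (0-based: the paper's gadget
index `i ∈ {1, …, n}`, so the paper's bounds `i - 1` and `i` are `i.val` and
`i.val + 1`), with `[σ(s)]_{B_i} - [σ(s)]_{A_i} ≤ i - 1`. Let `h = 0` if
`[σ(s)]_{C_i⁰} < [σ(s)]_{B_i} + 1` and `h = 1` otherwise. Then for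
`s' = s[h/x_i]` we have `[σ(s')]_{B_{i+1}} - [σ(s')]_{A_{i+1}} ≤ i`. -/
theorem gammaPhi_activation_propagates (n m : ℕ) (hn : 1 ≤ n) (hm : 1 ≤ m)
    (cl : Fin m → QClause n) (hgood : ∀ j, GoodClause (cl j))
    (σ : (PhiVar n → Bool) → PhiTask n → ℝ)
    (hviable : (GammaPhi n m cl).Viable σ) (hdyn : (GammaPhi n m cl).Dynamic σ)
    (s : PhiVar n → Bool) (i : Fin n)
    (hact : σ s (.B i.castSucc) - σ s (.A i.castSucc) ≤ (i.val : ℝ))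
    (h : Bool) (hh : h = false ↔ σ s (.C0 i) < σ s (.B i.castSucc) + 1) :
    σ (Function.update s (PhiVar.x i) h) (.B i.succ) -
      σ (Function.update s (PhiVar.x i) h) (.A i.succ) ≤ (i.val : ℝ) + 1 := by
  set s' := Function.update s (PhiVar.x i) h with hs'
  have hin : (i.val : ℝ) < n := by exact_mod_cast i.isLt
  have hx : s' (.x i) = h := by simp [hs']
  have hX : ∀ r, σ r (.A i.castSucc) - σ r (.X i) ≤ -((n : ℝ) + 2) := fun r =>
    GammaPhi_gadget_le hviable r i
      (c := (.X i, .A i.castSucc, -((n : ℝ) + 2), emptyLabel _))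
      (by simp [gadget]) (sats_emptyLabel _)
  have hY : σ s' (.X i) - σ s' (.Y i) ≤ -1 :=
    GammaPhi_gadget_le hviable s' i (c := (.Y i, .X i, -1, emptyLabel _))
      (by simp [gadget]) (sats_emptyLabel _)
  have hA : σ s' (.Y i) - σ s' (.A i.succ) ≤ -1 :=
    GammaPhi_gadget_le hviable s' i (c := (.A i.succ, .Y i, -1, emptyLabel _))
      (by simp [gadget]) (sats_emptyLabel _)
  have key : ∀ Z, σ s Z ≤ σ s (.X i) → σ s' Z = σ s Z := by
    intro Z hZ
    refine hdyn.eq_of_le (fun _ => rfl) (t := σ s (.X i)) ?_ ((min_le_left _ _).trans hZ)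
    intro p hp
    by_cases hpx : p = .x i
    · subst hpx; exact le_refl _
    · exact absurd (by simp [hs', hpx]) hp
  have hXs := hX s
  have hXs' := hX s'
  have hAs := key (.A i.castSucc) (by linarith)
  cases h with
  | false =>
    have hC := hh.1 rfl
    have hCs := key (.C0 i) (by linarith)
    have hB : σ s' (.B i.succ) - σ s' (.C0 i) ≤ (n : ℝ) + 4 :=
      GammaPhi_gadget_le hviable s' i
        (c := (.C0 i, .B i.succ, (n : ℝ) + 4, singleLabel (.x i) false))
        (by simp [gadget]) (sats_singleLabel hx)
    linarith
  | true =>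
    have hC := (GammaPhi_C0_or_C1_lt hviable hdyn s i hact).resolve_left
      fun hlt => Bool.noConfusion (hh.2 hlt)
    have hCs := key (.C1 i) (by linarith)
    have hB : σ s' (.B i.succ) - σ s' (.C1 i) ≤ (n : ℝ) + 4 :=
      GammaPhi_gadget_le hviable s' i
        (c := (.C1 i, .B i.succ, (n : ℝ) + 4, singleLabel (.x i) true))
        (by simp [gadget]) (sats_singleLabel hx)
    linarith
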